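/- arXiv:2203.01533 — 5 statements merged into one kernel-verified Lean document; each statement's English description precedes it below -/
import Mathlib

section
/- Let X be a finite set and let Δ ⊆ 2^X be a downward-closed family of subsets of X containing the empty set. Let U ∈ Δ, let x ∈ X \ U be such that U ∪ {x} ∈ Δ, and let y, z ∈ X \ U be distinct elements such that U ∪ {y, z} ∈ Δ. Suppose the local matrix A^U of (Δ, U) has at most one positive eigenvalue, counted with multiplicity. Then U ∪ {x, y} ∈ Δ or U ∪ {x, z} ∈ Δ. -/
open Matrix

/-- The local matrix `A^U` of a downward-closed family `Δ` at `U`, with rows and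
columns indexed by `X ∪ {*}` (modeled as `Option X`, with `none` playing the role
of the extra symbol `*`). -/
noncomputable def localMatrix {α : Type*} [DecidableEq α]
    (Δ : Finset (Finset α)) (U : Finset α) : Matrix (Option α) (Option α) ℝ :=
  fun i j =>
    match i, j with
    | some x, some y =>
        if x ≠ y ∧ x ∉ U ∧ y ∉ U ∧ insert x (insert y U) ∈ Δ then 1 else 0
    | some x, none => if x ∉ U ∧ insert x U ∈ Δ then 1 else 0
    | none, some y => if y ∉ U ∧ insert y U ∈ Δ then 1 else 0
    | none, none => 1

/-- The matrix `M` has at most one positive eigenvalue, counted with multiplicity. -/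
def AtMostOnePosEigenvalue {m : Type*} [Fintype m] [DecidableEq m]
    (M : Matrix m m ℝ) : Prop :=
  ∃ hM : M.IsHermitian,
    (Finset.univ.filter fun i => 0 < hM.eigenvalues i).card ≤ 1

/-!
Write `A` for the local matrix and `B` for its bilinear form. Since `A` has at most one positive
eigenvalue, `B` is nonpositive on a hyperplane, so it satisfies the reverse Cauchy–Schwarz
inequality `B u u * B w w ≤ B u w ^ 2` whenever `0 < B u u`. It follows that an isotropic vector
orthogonal to such a `u` lies in the kernel of `B`. If both conclusions fail, then `e_x` is
isotropic and orthogonal to `u = e_y + e_z`, for which `B u u = 2`; so `A e_x = 0`, contradicting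
`A x * = 1`.
-/

section BilinForm

variable {R V : Type*} [CommRing R] [LinearOrder R] [IsStrictOrderedRing R]
  [AddCommGroup V] [Module R V] {B : LinearMap.BilinForm R V}

theorem apply_self_mul_apply_self_le_sq_of_nonpos_on_ker (hB : B.IsSymm) {f : V →ₗ[R] R}
    (hf : ∀ w, f w = 0 → B w w ≤ 0) {u : V} (hu : 0 < B u u) (w : V) :
    B u u * B w w ≤ B u w ^ 2 := by
  have hfu : 0 < f u ^ 2 := sq_pos_of_ne_zero fun h ↦ (hf u h).not_gt hu
  have hker : B (f w • u - f u • w) (f w • u - f u • w) ≤ 0 :=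
    hf _ (by simp only [map_sub, map_smul, smul_eq_mul]; ring)
  have hexpand : B (f w • u - f u • w) (f w • u - f u • w) =
      f w ^ 2 * B u u - 2 * (f u * f w * B u w) + f u ^ 2 * B w w := by
    simp only [map_sub, map_smul, LinearMap.sub_apply, LinearMap.smul_apply, smul_eq_mul,
      hB.eq w u]
    ring
  have hdisc : 0 ≤ f u ^ 2 * (B u w ^ 2 - B u u * B w w) := calc
    0 ≤ (B u u * f w - B u w * f u) ^ 2 := sq_nonneg _
    _ = B u u * B (f w • u - f u • w) (f w • u - f u • w) +
          f u ^ 2 * (B u w ^ 2 - B u u * B w w) := by rw [hexpand]; ring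
    _ ≤ f u ^ 2 * (B u w ^ 2 - B u u * B w w) :=
      add_le_of_nonpos_left (mul_nonpos_of_nonneg_of_nonpos hu.le hker)
  exact sub_nonneg.mp (nonneg_of_mul_nonneg_right hdisc hfu)

theorem apply_eq_zero_of_apply_self_mul_apply_self_le_sq (hB : B.IsSymm) {u v : V}
    (hcs : ∀ w, B u u * B w w ≤ B u w ^ 2) (hu : 0 < B u u) (huv : B u v = 0) (hv : B v v = 0)
    (w : V) : B v w = 0 := by
  -- `B u` is constant along the line `w + s v`, on which `B` is affine with slope `2 * B v w`,
  -- so that slope must vanish. The factor `n` replaces a division by it, not available in `R`.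
  set d := B u w ^ 2 - B u u * B w w
  set n := 2 * (B u u * B v w)
  have hcs' := hcs (n • w + (d + 1) • v)
  simp only [map_add, map_smul, LinearMap.add_apply, LinearMap.smul_apply, smul_eq_mul, huv, hv,
    hB.eq w v] at hcs'
  have hn : n ^ 2 ≤ 0 := by linear_combination hcs'
  simpa [n, hu.ne'] using (sq_nonpos_iff n).mp hn

end BilinForm

section Matrix

variable {m : Type*} [Fintype m] [DecidableEq m]

theorem star_dotProduct_mulVec_eq_sum_eigenvalues {𝕜 : Type*} [RCLike 𝕜] {M : Matrix m m 𝕜}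
    (hM : M.IsHermitian) (w : m → 𝕜) :
    star w ⬝ᵥ M *ᵥ w = ∑ i, (hM.eigenvalues i : 𝕜) *
      (‖(star (hM.eigenvectorUnitary : Matrix m m 𝕜) *ᵥ w) i‖ : 𝕜) ^ 2 := by
  set P := star (hM.eigenvectorUnitary : Matrix m m 𝕜) with hP
  have hadjoint : star w ᵥ* star P = star (P *ᵥ w) := (star_mulVec P w).symm
  calc star w ⬝ᵥ M *ᵥ w
      = star w ⬝ᵥ (star P * diagonal (RCLike.ofReal ∘ hM.eigenvalues) * P) *ᵥ w := by
        conv_lhs => rw [hM.spectral_theorem, Unitary.conjStarAlgAut_apply]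
        rw [hP, star_star]
    _ = star (P *ᵥ w) ⬝ᵥ diagonal (RCLike.ofReal ∘ hM.eigenvalues) *ᵥ (P *ᵥ w) := by
        rw [← mulVec_mulVec, ← mulVec_mulVec, dotProduct_mulVec, hadjoint]
    _ = ∑ i, (hM.eigenvalues i : 𝕜) * (‖(P *ᵥ w) i‖ : 𝕜) ^ 2 := by
        refine Finset.sum_congr rfl fun i _ ↦ ?_
        rw [mulVec_diagonal, Pi.star_apply, mul_left_comm, RCLike.star_def, RCLike.conj_mul,
          Function.comp_apply]

theorem AtMostOnePosEigenvalue.exists_nonpos_on_ker {M : Matrix m m ℝ}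
    (h : AtMostOnePosEigenvalue M) :
    ∃ f : (m → ℝ) →ₗ[ℝ] ℝ, ∀ w, f w = 0 → M.toBilin' w w ≤ 0 := by
  obtain ⟨hM, hcard⟩ := h
  set P := star (hM.eigenvectorUnitary : Matrix m m ℝ)
  have hdiag (w : m → ℝ) : M.toBilin' w w = ∑ i, hM.eigenvalues i * (P *ᵥ w) i ^ 2 := by
    simpa [toBilin'_apply'] using star_dotProduct_mulVec_eq_sum_eigenvalues hM w
  have hterm {i : m} (w : m → ℝ) (hi : ¬0 < hM.eigenvalues i) :
      hM.eigenvalues i * (P *ᵥ w) i ^ 2 ≤ 0 :=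
    mul_nonpos_of_nonpos_of_nonneg (not_lt.mp hi) (sq_nonneg _)
  by_cases hpos : ∃ i, 0 < hM.eigenvalues i
  · obtain ⟨i, hi⟩ := hpos
    refine ⟨LinearMap.proj i ∘ₗ P.mulVecLin, fun w (hw : (P *ᵥ w) i = 0) ↦ ?_⟩
    rw [hdiag]
    refine Finset.sum_nonpos fun j _ ↦ ?_
    by_cases hj : 0 < hM.eigenvalues j
    · obtain rfl : j = i := Finset.card_le_one.mp hcard j (by simpa using hj) i (by simpa using hi)
      simp [hw]
    · exact hterm w hj
  · refine ⟨0, fun w _ ↦ ?_⟩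
    rw [hdiag]
    exact Finset.sum_nonpos fun j _ ↦ hterm w fun hj ↦ hpos ⟨j, hj⟩

theorem AtMostOnePosEigenvalue.toBilin'_apply_eq_zero {M : Matrix m m ℝ}
    (h : AtMostOnePosEigenvalue M) {u v : m → ℝ} (hu : 0 < M.toBilin' u u)
    (huv : M.toBilin' u v = 0) (hv : M.toBilin' v v = 0) (w : m → ℝ) : M.toBilin' v w = 0 := by
  have hsymm : M.toBilin'.IsSymm :=
    isSymm_toBilin'_iff_isSymm.mpr (isHermitian_iff_isSymm.mp h.1)
  obtain ⟨f, hf⟩ := h.exists_nonpos_on_ker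
  exact apply_eq_zero_of_apply_self_mul_apply_self_le_sq hsymm
    (apply_self_mul_apply_self_le_sq_of_nonpos_on_ker hsymm hf hu) hu huv hv w

theorem AtMostOnePosEigenvalue.apply_eq_zero {M : Matrix m m ℝ} (h : AtMostOnePosEigenvalue M)
    {i j k : m} (hjk : 0 < M j j + M j k + M k j + M k k) (hi : M i i = 0)
    (hjki : M j i + M k i = 0) (l : m) : M i l = 0 := by
  have hkernel := h.toBilin'_apply_eq_zero (u := Pi.single j 1 + Pi.single k 1)
    (v := Pi.single i 1) (by simpa [add_assoc, add_left_comm] using hjk)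
    (by simpa using hjki) (by simp [hi])
  simpa using hkernel (Pi.single l 1)

end Matrix

theorem stmt_6_general {α : Type*} [Fintype α] [DecidableEq α] (Δ : Finset (Finset α))
    (U : Finset α) (x : α) (hx : x ∉ U) (hxU : insert x U ∈ Δ)
    (y z : α) (hy : y ∉ U) (hz : z ∉ U) (hyz : y ≠ z) (hyzU : insert y (insert z U) ∈ Δ)
    (hEig : AtMostOnePosEigenvalue (localMatrix Δ U)) :
    insert x (insert y U) ∈ Δ ∨ insert x (insert z U) ∈ Δ := by
  by_contra! ⟨hxyU, hxzU⟩
  have hzyU : insert z (insert y U) ∈ Δ := by rwa [Finset.insert_comm]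
  have hyxU : insert y (insert x U) ∉ Δ := by rwa [Finset.insert_comm]
  have hzxU : insert z (insert x U) ∉ Δ := by rwa [Finset.insert_comm]
  have hrow : localMatrix Δ U (some x) none = 0 :=
    hEig.apply_eq_zero (j := some y) (k := some z)
      (by simp [localMatrix, hy, hz, hyz, hyz.symm, hyzU, hzyU])
      (by simp [localMatrix]) (by simp [localMatrix, hyxU, hzxU]) none
  simp [localMatrix, hx, hxU] at hrow

theorem stmt_6 {α : Type*} [Fintype α] [DecidableEq α]
    (Δ : Finset (Finset α))
    (hdown : ∀ S T : Finset α, S ⊆ T → T ∈ Δ → S ∈ Δ)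
    (hempty : ∅ ∈ Δ)
    (U : Finset α) (hU : U ∈ Δ)
    (x : α) (hx : x ∉ U) (hxU : insert x U ∈ Δ)
    (y z : α) (hy : y ∉ U) (hz : z ∉ U) (hyz : y ≠ z)
    (hyzU : insert y (insert z U) ∈ Δ)
    (hEig : AtMostOnePosEigenvalue (localMatrix Δ U)) :
    insert x (insert y U) ∈ Δ ∨ insert x (insert z U) ∈ Δ :=
  stmt_6_general Δ U x hx hxU y z hy hz hyz hyzU hEig
end

section
/- Let X be a finite set and let Δ ⊆ 2^X be a downward-closed family of subsets of X containing the empty set. Suppose that for every U ∈ Δ the local matrix A^U of (Δ, U) has at most one positive eigenvalue, counted with multiplicity. Then Δ satisfies the matroid exchange property: for all S, T ∈ Δ with |S| < |T| there exists y ∈ T \ S such that S ∪ {y} ∈ Δ (i.e. Δ is the family of independent sets of a matroid). -/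
open Matrix

/-!
Having at most one positive eigenvalue means that the quadratic form of a matrix has no positive
definite plane, and so satisfies the reverse Cauchy–Schwarz inequality
`(u ⬝ A u) (v ⬝ A v) ≤ (u ⬝ A v) ^ 2` as soon as `0 < u ⬝ A u`. If exchange failed for `I ∪ {s}` and
`I ∪ {y, z}`, then `u = e_*` and `v = e_y + e_z - e_s` would violate it for the local matrix at `I`:
the left side is `1 * 2`, the right side `1`. Exchange for `S` and `T` in general follows by
induction on `|S \ T|`: remove some `s ∈ S \ T` from `S`, extend the rest twice by elements `y, z`
of `T`, and exchange locally.
-/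

section QuadraticForm

open Module QuadraticMap

variable {𝕜 V W : Type*} [Field 𝕜] [LinearOrder 𝕜]
  [AddCommGroup V] [Module 𝕜 V] [FiniteDimensional 𝕜 V] [AddCommGroup W] [Module 𝕜 W]
  {Q : QuadraticForm 𝕜 V}

theorem finrank_le_sigPos_of_posDef_comp (f : W →ₗ[𝕜] V) (hf : (Q.comp f).PosDef) :
    finrank 𝕜 W ≤ sigPos Q := by
  have hinj : Function.Injective f := by
    rw [← LinearMap.ker_eq_bot, LinearMap.ker_eq_bot']
    intro x hx
    by_contra hx0
    simpa [hx] using hf x hx0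
  have hrange : (Q.restrict (LinearMap.range f)).PosDef := by
    rintro ⟨_, x, rfl⟩ hx
    exact hf x fun hx0 ↦ hx (by simp [hx0])
  rw [← LinearMap.finrank_range_of_inj hinj]
  exact le_sigPos_of_posDef Q hrange

theorem four_mul_map_mul_map_le_polar_sq [IsStrictOrderedRing 𝕜] (hQ : sigPos Q ≤ 1) {u : V}
    (hu : 0 < Q u) (v : V) : 4 * (Q u * Q v) ≤ polar Q u v ^ 2 := by
  by_contra! hlt
  have hdisc : 0 < 4 * (Q u * Q v) - polar Q u v ^ 2 := sub_pos.mpr hlt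
  let f : 𝕜 × 𝕜 →ₗ[𝕜] V :=
    (LinearMap.toSpanSingleton 𝕜 V u).coprod (LinearMap.toSpanSingleton 𝕜 V v)
  have hsq (a b : 𝕜) : 4 * Q u * Q (f (a, b)) =
      (2 * Q u * a + polar Q u v * b) ^ 2 + (4 * (Q u * Q v) - polar Q u v ^ 2) * b ^ 2 := by
    simp only [f, LinearMap.coprod_apply, LinearMap.toSpanSingleton_apply,
      QuadraticMap.map_add Q, QuadraticMap.map_smul, polar_smul_left, polar_smul_right,
      smul_eq_mul]
    ring
  have hpos : (Q.comp f).PosDef := by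
    rintro ⟨a, b⟩ hab
    refine pos_of_mul_pos_right (a := 4 * Q u) ?_ (by positivity)
    rw [QuadraticMap.comp_apply, hsq]
    rcases eq_or_ne b 0 with rfl | hb
    · have ha : a ≠ 0 := by simpa using hab
      simp only [mul_zero, add_zero]
      positivity
    · exact add_pos_of_nonneg_of_pos (sq_nonneg _) (mul_pos hdisc (by positivity))
  have hfinrank : finrank 𝕜 (𝕜 × 𝕜) ≤ 1 := (finrank_le_sigPos_of_posDef_comp f hpos).trans hQ
  simp at hfinrank

end QuadraticForm

section Matrix

theorem polar_toQuadraticForm' {R m : Type*} [CommRing R] [Fintype m] [DecidableEq m]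
    {M : Matrix m m R} (hM : M.IsSymm) (u v : m → R) :
    QuadraticMap.polar M.toQuadraticForm' u v = 2 * (u ⬝ᵥ M *ᵥ v) := by
  have hsymm : v ⬝ᵥ M *ᵥ u = u ⬝ᵥ M *ᵥ v := by
    rw [dotProduct_mulVec, ← mulVec_transpose, hM.eq, dotProduct_comm]
  rw [toQuadraticForm', LinearMap.BilinMap.polar_toQuadraticMap, toLinearMap₂'_apply',
    toLinearMap₂'_apply', hsymm, two_mul]

variable {m : Type*} [Fintype m] [DecidableEq m] {M : Matrix m m ℝ}

theorem toQuadraticForm'_equivalent_weightedSumSquares_eigenvalues (hM : M.IsHermitian) :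
    M.toQuadraticForm'.Equivalent (QuadraticMap.weightedSumSquares ℝ hM.eigenvalues) := by
  let P : Matrix m m ℝ := hM.eigenvectorUnitary
  let e : (m → ℝ) ≃ₗ[ℝ] m → ℝ := UnitaryGroup.toLinearEquiv hM.eigenvectorUnitary
  have hdiag : Pᵀ * M * P = diagonal hM.eigenvalues := by
    simpa [Unitary.conjStarAlgAut_star_apply, star_eq_conjTranspose] using
      hM.conjStarAlgAut_star_eigenvectorUnitary
  have hcomp : M.toQuadraticForm'.comp (e : (m → ℝ) →ₗ[ℝ] m → ℝ) =
      QuadraticMap.weightedSumSquares ℝ hM.eigenvalues := by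
    ext x
    calc M.toQuadraticForm' (P *ᵥ x)
      _ = (P *ᵥ x) ⬝ᵥ M *ᵥ P *ᵥ x := toLinearMap₂'_apply' ..
      _ = x ⬝ᵥ (Pᵀ * M * P) *ᵥ x := by
        simp only [← mulVec_mulVec, dotProduct_mulVec x, vecMul_transpose]
      _ = QuadraticMap.weightedSumSquares ℝ hM.eigenvalues x := by
        simp only [hdiag, dotProduct, mulVec_diagonal, QuadraticMap.weightedSumSquares_apply,
          smul_eq_mul, mul_left_comm]
  rw [← hcomp]
  exact ⟨QuadraticMap.isometryEquivOfCompLinearEquiv _ e⟩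

theorem sigPos_toQuadraticForm' (hM : M.IsHermitian) :
    sigPos M.toQuadraticForm' = (Finset.univ.filter fun i ↦ 0 < hM.eigenvalues i).card := by
  rw [QuadraticForm.sigPos_of_equiv_weightedSumSquares
    (toQuadraticForm'_equivalent_weightedSumSquares_eigenvalues hM), Set.ncard_eq_toFinset_card',
    Set.toFinset_ofPred]

theorem AtMostOnePosEigenvalue.dotProduct_mulVec_mul_le_sq (hM : AtMostOnePosEigenvalue M)
    {u : m → ℝ} (hu : 0 < u ⬝ᵥ M *ᵥ u) (v : m → ℝ) :
    (u ⬝ᵥ M *ᵥ u) * (v ⬝ᵥ M *ᵥ v) ≤ (u ⬝ᵥ M *ᵥ v) ^ 2 := by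
  obtain ⟨hherm, hcard⟩ := hM
  have hsymm : M.IsSymm := hherm
  have happly (x : m → ℝ) : M.toQuadraticForm' x = x ⬝ᵥ M *ᵥ x := toLinearMap₂'_apply' ..
  have hsig : sigPos M.toQuadraticForm' ≤ 1 := (sigPos_toQuadraticForm' hherm).trans_le hcard
  have hpolar := four_mul_map_mul_map_le_polar_sq hsig (by rwa [happly]) v
  rw [happly, happly, polar_toQuadraticForm' hsymm] at hpolar
  linarith

end Matrix

section Exchange

variable {α : Type*} [DecidableEq α]

/-- The exchange property of the family `Δ` for all pairs of sets `I ∪ {s}` and `I ∪ {y, z}`.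
The elements `s`, `y`, `z` are not required to lie outside `I`, nor `s` to differ from `y` and `z`:
in these cases the property is automatic for a downward-closed `Δ`. -/
def LocalExchange (Δ : Set (Finset α)) (I : Finset α) : Prop :=
  ∀ ⦃s y z : α⦄, y ≠ z → insert s I ∈ Δ → insert y (insert z I) ∈ Δ →
    insert y (insert s I) ∈ Δ ∨ insert z (insert s I) ∈ Δ

theorem exists_insert_mem_of_forall_localExchange {Δ : Set (Finset α)} (hΔ : IsLowerSet Δ)
    (hlocal : ∀ I ∈ Δ, LocalExchange Δ I) {S T : Finset α} (hS : S ∈ Δ) (hT : T ∈ Δ)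
    (hcard : S.card < T.card) : ∃ y ∈ T \ S, insert y S ∈ Δ := by
  induction hn : (S \ T).card generalizing S with
  | zero =>
    have hST : S ⊆ T := Finset.sdiff_eq_empty_iff_subset.mp (Finset.card_eq_zero.mp hn)
    obtain ⟨y, hyT, hyS⟩ := Finset.exists_mem_notMem_of_card_lt_card hcard
    exact ⟨y, Finset.mem_sdiff.mpr ⟨hyT, hyS⟩, hΔ (Finset.insert_subset hyT hST) hT⟩
  | succ n ih =>
    obtain ⟨s, hs⟩ : (S \ T).Nonempty := Finset.card_pos.mp (by omega)
    obtain ⟨hsS, hsT⟩ := Finset.mem_sdiff.mp hs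
    obtain ⟨I, hsI, rfl⟩ : ∃ I, s ∉ I ∧ S = insert s I :=
      ⟨S.erase s, Finset.notMem_erase s S, (Finset.insert_erase hsS).symm⟩
    rw [Finset.card_insert_of_notMem hsI] at hcard
    have hnI : (I \ T).card = n := by
      rw [Finset.insert_sdiff_of_notMem I hsT, Finset.card_insert_of_notMem (by simp [hsI])] at hn
      omega
    have hI : I ∈ Δ := hΔ (Finset.subset_insert s I) hS
    obtain ⟨y, hy, hyI⟩ := ih hI (by omega) hnI
    obtain ⟨hyT, hy_not⟩ := Finset.mem_sdiff.mp hy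
    obtain ⟨z, hz, hzyI⟩ := ih hyI (by rwa [Finset.card_insert_of_notMem hy_not])
      (by rwa [Finset.insert_sdiff_of_mem I hyT])
    have hzy : z ≠ y := by grind
    rcases hlocal I hI hzy hS hzyI with hzsI | hysI
    · exact ⟨z, by grind, hzsI⟩
    · exact ⟨y, by grind, hysI⟩

theorem localExchange_of_atMostOnePosEigenvalue [Fintype α] {Δ : Finset (Finset α)}
    (hΔ : IsLowerSet (Δ : Set (Finset α))) {I : Finset α}
    (hI : AtMostOnePosEigenvalue (localMatrix Δ I)) : LocalExchange (Δ : Set (Finset α)) I := by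
  intro s y z hyz hsI hyzI
  by_contra! ⟨hysI, hzsI⟩
  have hyI : insert y I ∈ (Δ : Set (Finset α)) := hΔ (by grind) hyzI
  have hzI : insert z I ∈ (Δ : Set (Finset α)) := hΔ (by grind) hyzI
  have hs : s ∉ I := by grind
  obtain ⟨hys, hy⟩ : y ≠ s ∧ y ∉ I := by grind
  obtain ⟨hzs, hz⟩ : z ≠ s ∧ z ∉ I := by grind
  have hzyI := Finset.insert_comm y z I ▸ hyzI
  have hsyI := Finset.insert_comm y s I ▸ hysI
  have hszI := Finset.insert_comm z s I ▸ hzsI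
  simp only [Finset.mem_coe] at *
  let e (i : Option α) : Option α → ℝ := Pi.single i 1
  let v := e (some y) + e (some z) - e (some s)
  have huu : e none ⬝ᵥ localMatrix Δ I *ᵥ e none = 1 := by simp [e, localMatrix]
  have huv : e none ⬝ᵥ localMatrix Δ I *ᵥ v = 1 := by
    simp [e, v, localMatrix, mulVec_add, mulVec_sub, *]
  have hvv : v ⬝ᵥ localMatrix Δ I *ᵥ v = 2 := by
    norm_num [e, v, localMatrix, mulVec_add, mulVec_sub, *, hyz.symm, hys.symm, hzs.symm]
  have hle := hI.dotProduct_mulVec_mul_le_sq (u := e none) (by simp [huu]) v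
  rw [huu, huv, hvv] at hle
  norm_num at hle

end Exchange

theorem stmt_7 {α : Type*} [Fintype α] [DecidableEq α]
    (Δ : Finset (Finset α))
    (hdown : ∀ S T : Finset α, S ⊆ T → T ∈ Δ → S ∈ Δ)
    (hempty : ∅ ∈ Δ)
    (hEig : ∀ U ∈ Δ, AtMostOnePosEigenvalue (localMatrix Δ U)) :
    ∀ S ∈ Δ, ∀ T ∈ Δ, S.card < T.card →
      ∃ y ∈ T \ S, insert y S ∈ Δ := by
  intro S hS T hT hcard
  have hΔ : IsLowerSet (Δ : Set (Finset α)) := fun T S hST hT ↦ hdown S T hST hT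
  have hlocal : ∀ U ∈ (Δ : Set (Finset α)), LocalExchange (Δ : Set (Finset α)) U := fun U hU ↦
    localExchange_of_atMostOnePosEigenvalue hΔ (hEig U hU)
  exact exists_insert_mem_of_forall_localExchange hΔ hlocal hS hT hcard
end

section
/- Let M be a matroid on a finite ground set X and let S be an independent set of M. Let A be the real symmetric matrix with rows and columns indexed by X ∪ {*} (where * is a new symbol not in X), with entries: for distinct x, y ∈ X, A_{xy} = 1 if x, y ∉ S and S ∪ {x, y} is independent, and A_{xy} = 0 otherwise; A_{xx} = 0 for all x ∈ X; A_{x*} = A_{*x} = 1 if x ∉ S and S ∪ {x} is independent, and 0 otherwise; and A_{**} = 1. Then A has at most one positive eigenvalue, counted with multiplicity. -/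
open Matrix
open scoped Classical

/-- The local matrix of a matroid `M` at an independent set `S`, with rows and
columns indexed by `X ∪ {*}` (modeled as `Option X`, with `none` playing the role
of the extra symbol `*`). -/
noncomputable def matroidLocalMatrix {α : Type*} [DecidableEq α]
    (M : Matroid α) (S : Finset α) : Matrix (Option α) (Option α) ℝ :=
  fun i j =>
    match i, j with
    | some x, some y =>
        if x ≠ y ∧ x ∉ S ∧ y ∉ S ∧ M.Indep ↑(insert x (insert y S)) then 1 else 0
    | some x, none => if x ∉ S ∧ M.Indep ↑(insert x S) then 1 else 0
    | none, some y => if y ∉ S ∧ M.Indep ↑(insert y S) then 1 else 0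
    | none, none => 1

/-! The matrix `A` has a `1` at `(*, *)`, and subtracting it from the square `v vᵀ` of its row `v`
at `*` clears the row and column of `*`. On `X`, independence of `S ∪ {x, y}` fails, for elements
`x`, `y` extending `S`, exactly when they are equal or parallel in `M ／ S`, i.e. when `S ∪ {x}`
and `S ∪ {y}` span the same flat. Hence `v vᵀ - A` is the `0`-`1` matrix of an equivalence relation
on the extending elements, and is positive semidefinite. So `A` is bounded above by a matrix of
rank one in the Loewner order, which leaves room for only one positive eigenvalue. -/

section Eigenvalues

open scoped ComplexOrder

theorem card_le_rank_of_isUnit_mul_mul {R m n p : Type*} [CommSemiring R]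
    [StrongRankCondition R] [Fintype m] [DecidableEq m] [Fintype n] [Fintype p]
    {Q : Matrix m n R} {B : Matrix n p R} {P : Matrix p m R}
    (h : IsUnit (Q * B * P)) : Fintype.card m ≤ B.rank :=
  calc
    Fintype.card m = (Q * B * P).rank := (rank_of_isUnit _ h).symm
    _ ≤ (Q * B).rank := rank_mul_le_left _ _
    _ ≤ B.rank := rank_mul_le_right _ _

theorem card_pos_eigenvalues_le_rank {𝕜 n : Type*} [RCLike 𝕜] [Fintype n] [DecidableEq n]
    {A B : Matrix n n 𝕜} (hA : A.IsHermitian) (hAB : (B - A).PosSemidef) :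
    (Finset.univ.filter fun i => 0 < hA.eigenvalues i).card ≤ B.rank := by
  -- The columns of `P` are the eigenvectors with positive eigenvalue: `A`, and therefore `B`, is
  -- positive definite on their span.
  let U : Matrix n n 𝕜 := hA.eigenvectorUnitary
  let P : Matrix n {i // 0 < hA.eigenvalues i} 𝕜 := U.submatrix id Subtype.val
  have diagonalized : Uᴴ * A * U = diagonal (RCLike.ofReal ∘ hA.eigenvalues) := by
    rw [← hA.conjStarAlgAut_star_eigenvectorUnitary, Unitary.conjStarAlgAut_star_apply]
    rfl
  have restricted : Pᴴ * A * P = diagonal fun i => (hA.eigenvalues i.1 : 𝕜) :=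
    calc
      Pᴴ * A * P = (Uᴴ * A * U).submatrix Subtype.val Subtype.val := rfl
      _ = diagonal fun i => (hA.eigenvalues i.1 : 𝕜) := by
        rw [diagonalized, submatrix_diagonal _ _ Subtype.val_injective]
        rfl
  have posDef_A : (Pᴴ * A * P).PosDef := by
    rw [restricted]
    exact .diagonal fun i => by exact_mod_cast i.2
  have posDef_B : (Pᴴ * B * P).PosDef := by
    have := posDef_A.add_posSemidef (hAB.conjTranspose_mul_mul_same P)
    rwa [← Matrix.add_mul, ← Matrix.mul_add, add_sub_cancel] at this
  rw [← Fintype.card_subtype]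
  exact card_le_rank_of_isUnit_mul_mul posDef_B.isUnit

end Eigenvalues

section Extensions

variable {α : Type*} (M : Matroid α) (S : Set α) {x y : α}

/-- The flat spanned by `insert e S` when `e` extends `S` to a larger independent set, and `none`
otherwise. For independent `S`, its fibres other than that of `none` are the parallel classes
of the contraction `M ／ S`. -/
noncomputable def extensionFlat (e : α) : Option (Set α) :=
  if e ∉ S ∧ M.Indep (insert e S) then some (M.closure (insert e S)) else none

variable {M S}

theorem indep_insert_insert_iff_closure_ne (hxS : x ∉ S) (hx : M.Indep (insert x S))
    (hy : M.Indep (insert y S)) :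
    x ≠ y ∧ M.Indep (insert x (insert y S)) ↔
      M.closure (insert x S) ≠ M.closure (insert y S) := by
  have hxE : x ∈ M.E := hx.subset_ground (Set.mem_insert x S)
  have hx_cl : x ∉ M.closure S :=
    ((hx.subset (Set.subset_insert x S)).notMem_closure_iff_of_notMem hxS).2 hx
  have closure_eq_iff :
      M.closure (insert x S) = M.closure (insert y S) ↔ x ∈ M.closure (insert y S) :=
    ⟨fun h => h ▸ M.mem_closure_of_mem (Set.mem_insert x S) hx.subset_ground,
      fun h => Matroid.closure_insert_congr ⟨h, hx_cl⟩⟩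
  rw [ne_eq (M.closure _), closure_eq_iff, hy.notMem_closure_iff hxE]
  simp only [Set.mem_insert_iff, hxS, or_false, ne_eq, and_comm]

theorem indep_insert_insert_iff_extensionFlat_ne :
    (x ≠ y ∧ x ∉ S ∧ y ∉ S ∧ M.Indep (insert x (insert y S))) ↔
      extensionFlat M S x ≠ none ∧ extensionFlat M S y ≠ none ∧
        extensionFlat M S x ≠ extensionFlat M S y := by
  by_cases hx : x ∉ S ∧ M.Indep (insert x S)
  · by_cases hy : y ∉ S ∧ M.Indep (insert y S)
    · simpa [extensionFlat, hx, hy] using indep_insert_insert_iff_closure_ne hx.1 hx.2 hy.2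
    · have : y ∉ S → ¬ M.Indep (insert x (insert y S)) := fun hyS h =>
        hy ⟨hyS, h.subset (Set.subset_insert _ _)⟩
      simp only [extensionFlat, if_neg hy]
      tauto
  · have : x ∉ S → ¬ M.Indep (insert x (insert y S)) := fun hxS h =>
      hx ⟨hxS, h.subset (Set.insert_subset_insert (Set.subset_insert _ _))⟩
    simp only [extensionFlat, if_neg hx]
    tauto

end Extensions

section LocalMatrix

variable {α : Type*} [DecidableEq α] (M : Matroid α) (S : Finset α)

theorem matroidLocalMatrix_none_some (x : α) :
    matroidLocalMatrix M S none (some x) = if extensionFlat M S x ≠ none then 1 else 0 := by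
  simp [matroidLocalMatrix, extensionFlat]

theorem matroidLocalMatrix_some_some (x y : α) :
    matroidLocalMatrix M S (some x) (some y) =
      if extensionFlat M S x ≠ none ∧ extensionFlat M S y ≠ none ∧
        extensionFlat M S x ≠ extensionFlat M S y then 1 else 0 := by
  simp only [matroidLocalMatrix, Finset.coe_insert, ← indep_insert_insert_iff_extensionFlat_ne,
    Finset.mem_coe]

theorem isHermitian_matroidLocalMatrix : (matroidLocalMatrix M S).IsHermitian := by
  ext (_ | x) (_ | y)
  · rfl
  · rfl
  · rfl
  · simp only [conjTranspose_apply, star_trivial, matroidLocalMatrix_some_some]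
    exact if_congr (by tauto) rfl rfl

theorem vecMulVec_none_sub_matroidLocalMatrix :
    vecMulVec (matroidLocalMatrix M S none) (matroidLocalMatrix M S none) - matroidLocalMatrix M S =
      (diagonal fun F : Option (Set α) => if F ≠ none then (1 : ℝ) else 0).submatrix
        (·.bind (extensionFlat M S)) (·.bind (extensionFlat M S)) := by
  have none_none : matroidLocalMatrix M S none none = 1 := rfl
  have some_none (x : α) :
      matroidLocalMatrix M S (some x) none = matroidLocalMatrix M S none (some x) := rfl
  ext (_ | x) (_ | y)
  · simp [vecMulVec_apply, none_none]
  · simp [vecMulVec_apply, none_none, diagonal_apply]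
  · simp [vecMulVec_apply, none_none, some_none, diagonal_apply]
  · simp only [Matrix.sub_apply, vecMulVec_apply, matroidLocalMatrix_none_some,
      matroidLocalMatrix_some_some, submatrix_apply, Option.bind_some, diagonal_apply]
    grind

theorem posSemidef_vecMulVec_none_sub_matroidLocalMatrix :
    (vecMulVec (matroidLocalMatrix M S none) (matroidLocalMatrix M S none) -
      matroidLocalMatrix M S).PosSemidef := by
  rw [vecMulVec_none_sub_matroidLocalMatrix]
  exact (PosSemidef.diagonal fun F => by dsimp; split_ifs <;> norm_num).submatrix _

end LocalMatrix

theorem stmt_8_general {α : Type*} [Fintype α] [DecidableEq α] (M : Matroid α) (S : Finset α) :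
    AtMostOnePosEigenvalue (matroidLocalMatrix M S) :=
  ⟨isHermitian_matroidLocalMatrix M S,
    (card_pos_eigenvalues_le_rank _ (posSemidef_vecMulVec_none_sub_matroidLocalMatrix M S)).trans
      (rank_vecMulVec_le _ _)⟩

theorem stmt_8 {α : Type*} [Fintype α] [DecidableEq α]
    (M : Matroid α) (hE : M.E = Set.univ)
    (S : Finset α) (hS : M.Indep ↑S) :
    AtMostOnePosEigenvalue (matroidLocalMatrix M S) :=
  stmt_8_general M S
end

section
/- Let f ∈ ℝ[w_1, …, w_n] be a Lorentzian polynomial of degree d ≥ 2. Then for every point w = (w_1, …, w_n) ∈ ℝ^n with all coordinates strictly positive, the Hessian matrix H_f(w) satisfies (Hyp). -/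
open Matrix MvPolynomial

/-- A real symmetric `r × r` matrix `M` satisfies (Hyp) if for all `v, w ∈ ℝ^r` with
`⟨w, M w⟩ > 0` one has `⟨v, M w⟩² ≥ ⟨v, M v⟩ · ⟨w, M w⟩`. -/
def SatisfiesHyp {n : ℕ} (M : Matrix (Fin n) (Fin n) ℝ) : Prop :=
  ∀ v w : Fin n → ℝ, 0 < w ⬝ᵥ M.mulVec w →
    (v ⬝ᵥ M.mulVec w) ^ 2 ≥ (v ⬝ᵥ M.mulVec v) * (w ⬝ᵥ M.mulVec w)

/-- The iterated partial derivative `∂^m f = ∂_1^{m_1} ⋯ ∂_n^{m_n} f`. -/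
noncomputable def iterPderiv {n : ℕ} (m : Fin n →₀ ℕ) (f : MvPolynomial (Fin n) ℝ) :
    MvPolynomial (Fin n) ℝ :=
  (Finset.univ : Finset (Fin n)).toList.foldr
    (fun i g => (fun p => pderiv i p)^[m i] g) f

/-- The Hessian matrix of `f` at the point `w`. -/
noncomputable def hess {n : ℕ} (f : MvPolynomial (Fin n) ℝ) (w : Fin n → ℝ) :
    Matrix (Fin n) (Fin n) ℝ :=
  fun i j => eval w (pderiv i (pderiv j f))

/-- A set `J ⊆ ℕ^n` is M-convex. -/
def MConvex {n : ℕ} (J : Set (Fin n →₀ ℕ)) : Prop :=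
  ∀ m ∈ J, ∀ m' ∈ J, ∀ i : Fin n, m' i < m i →
    ∃ j : Fin n, m j < m' j ∧ m - Finsupp.single i 1 + Finsupp.single j 1 ∈ J

/-- A homogeneous polynomial `f` of degree `d` with nonnegative coefficients is
Lorentzian if its support is M-convex and for every `m ∈ ℕ^n` with
`m_1 + ⋯ + m_n = d - 2` the (constant) Hessian of `∂^m f` has at most one
positive eigenvalue. -/
def IsLorentzian {n : ℕ} (d : ℕ) (f : MvPolynomial (Fin n) ℝ) : Prop :=
  f.IsHomogeneous d ∧ (∀ m, 0 ≤ f.coeff m) ∧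
    MConvex (↑f.support : Set (Fin n →₀ ℕ)) ∧
    ∀ m : Fin n →₀ ℕ, (∑ i, m i) = d - 2 →
      AtMostOnePosEigenvalue (hess (iterPderiv m f) 0)

/-!
The proof is by induction on the degree. In degree two the Hessian is constant and the claim follows
from the spectral theorem. In higher degree write `H` for the Hessian of `f` at `w`. By Euler's
identity, (Hyp) for the Hessians of all `∂_i f` with `w` as the second vector sums up to the Bochner
inequality `⟨u, H u⟩ ≤ ∑ i, w_i (H u)_i² / (H w)_i`.

Let `D` be the diagonal matrix with `D w = H w`. The Laplacian `L = D - H` is positive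
semidefinite, and by M-convexity of the support of `f` its kernel is spanned by `w`, up to the
indices of zero rows of `H`. Hence if `⟨v, H w⟩ = 0`, then `D v = L u` for some `u`, that is,
`H u = D (u - v)` and `L (u - v) = H v`. Positivity of `L` at `u - v` gives `⟨v, H v⟩ ≤ ⟨v, H u⟩`,
and the Bochner inequality at `u` gives `⟨v, H u⟩ ≤ 0`. So `H` is nonpositive on the hyperplane
orthogonal to `H w`, which implies (Hyp).
-/

section QuadraticForms

variable {ι : Type*} [Fintype ι]

lemma dotProduct_mulVec_comm_of_isSymm {R : Type*} [CommSemiring R] {M : Matrix ι ι R}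
    (hM : M.IsSymm) (x y : ι → R) : x ⬝ᵥ M *ᵥ y = y ⬝ᵥ M *ᵥ x := by
  rw [← dotProduct_transpose_mulVec, hM.eq]

lemma eq_zero_of_sum_sum_eq_zero {κ α : Type*} [Fintype κ] [AddCommMonoid α] [PartialOrder α]
    [IsOrderedAddMonoid α] {F : ι → κ → α} (hF : ∀ i j, 0 ≤ F i j)
    (h : ∑ i, ∑ j, F i j = 0) (i : ι) (j : κ) : F i j = 0 := by
  have hrow := congrFun ((Fintype.sum_eq_zero_iff_of_nonneg
    fun i ↦ Finset.sum_nonneg fun j _ ↦ hF i j).mp h) i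
  exact congrFun ((Fintype.sum_eq_zero_iff_of_nonneg (hF i)).mp hrow) j

variable {M : Matrix ι ι ℝ}

lemma mulVec_nonneg_of_nonneg (hM : ∀ i j, 0 ≤ M i j) {w : ι → ℝ} (hw : 0 ≤ w) : 0 ≤ M *ᵥ w :=
  fun i ↦ dotProduct_nonneg_of_nonneg (hM i) hw

lemma eq_zero_of_dotProduct_mulVec_eq_zero (hM : ∀ i j, 0 ≤ M i j) {w : ι → ℝ}
    (hw : ∀ i, 0 < w i) (h : w ⬝ᵥ M *ᵥ w = 0) : M = 0 := by
  simp only [dotProduct, mulVec, Finset.mul_sum] at h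
  ext i j
  have hij := eq_zero_of_sum_sum_eq_zero
    (fun i j ↦ mul_nonneg (hw i).le (mul_nonneg (hM i j) (hw j).le)) h i j
  simpa [(hw i).ne', (hw j).ne'] using hij

lemma exists_mulVec_eq_of_isSymm (hM : M.IsSymm) {b : ι → ℝ}
    (hb : ∀ x, M *ᵥ x = 0 → x ⬝ᵥ b = 0) : ∃ u, M *ᵥ u = b := by
  classical
  have hT : M.toEuclideanLin.IsSymmetric :=
    isSymmetric_toEuclideanLin_iff.mpr (isHermitian_iff_isSymm.mpr hM)
  suffices h : WithLp.toLp 2 b ∈ M.toEuclideanLin.range by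
    obtain ⟨u, hu⟩ := h
    exact ⟨u.ofLp, congrArg WithLp.ofLp hu⟩
  rw [← M.toEuclideanLin.range.orthogonal_orthogonal, hT.orthogonal_range]
  intro x hx
  rw [EuclideanSpace.inner_eq_star_dotProduct, star_trivial, dotProduct_comm]
  exact hb x.ofLp (congrArg WithLp.ofLp (LinearMap.mem_ker.mp hx))

lemma dotProduct_mulVec_self_eq_sum_eigenvalues [DecidableEq ι] (hM : M.IsHermitian)
    (v : ι → ℝ) :
    v ⬝ᵥ M *ᵥ v = ∑ i, hM.eigenvalues i * (⇑(hM.eigenvectorBasis i) ⬝ᵥ v) ^ 2 := by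
  have parseval := hM.eigenvectorBasis.sum_inner_mul_inner (WithLp.toLp 2 v)
    (WithLp.toLp 2 (M *ᵥ v))
  simp only [EuclideanSpace.inner_eq_star_dotProduct, star_trivial] at parseval
  rw [dotProduct_comm, ← parseval]
  refine Finset.sum_congr rfl fun i _ ↦ ?_
  rw [dotProduct_comm (M *ᵥ v),
    dotProduct_mulVec_comm_of_isSymm (isHermitian_iff_isSymm.mp hM),
    hM.mulVec_eigenvectorBasis, dotProduct_smul, dotProduct_comm v, smul_eq_mul]
  ring

end QuadraticForms

section Hyp

variable {n : ℕ} {M : Matrix (Fin n) (Fin n) ℝ}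

lemma satisfiesHyp_of_nonpos_on_hyperplane (hM : M.IsSymm) (u : Fin n → ℝ)
    (h : ∀ v, u ⬝ᵥ v = 0 → v ⬝ᵥ M *ᵥ v ≤ 0) : SatisfiesHyp M := by
  intro v w hw
  have hz := h ((u ⬝ᵥ w) • v - (u ⬝ᵥ v) • w) (by
    simp only [dotProduct_sub, dotProduct_smul, smul_eq_mul]; ring)
  have ha : u ⬝ᵥ w ≠ 0 := fun h0 ↦ (h w h0).not_gt hw
  simp only [mulVec_sub, mulVec_smul, dotProduct_sub, sub_dotProduct, dotProduct_smul,
    smul_dotProduct, smul_eq_mul, dotProduct_mulVec_comm_of_isSymm hM w v] at hz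
  set a := u ⬝ᵥ w
  set b := u ⬝ᵥ v
  set B := v ⬝ᵥ M *ᵥ w
  set p := v ⬝ᵥ M *ᵥ v
  set q := w ⬝ᵥ M *ᵥ w
  refine le_of_mul_le_mul_left ?_ (sq_pos_of_ne_zero ha)
  nlinarith [sq_nonneg (a * B - b * q), mul_nonpos_of_nonneg_of_nonpos hw.le hz]

theorem AtMostOnePosEigenvalue.satisfiesHyp (h : AtMostOnePosEigenvalue M) :
    SatisfiesHyp M := by
  obtain ⟨hM, hcard⟩ := h
  obtain ⟨u, hu⟩ : ∃ u : Fin n → ℝ, ∀ i, 0 < hM.eigenvalues i → hM.eigenvectorBasis i = u := by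
    by_cases hpos : ∃ i, 0 < hM.eigenvalues i
    · obtain ⟨i, hi⟩ := hpos
      refine ⟨hM.eigenvectorBasis i, fun j hj ↦ ?_⟩
      rw [Finset.card_le_one.mp hcard j (by simpa using hj) i (by simpa using hi)]
    · exact ⟨0, fun i hi ↦ absurd ⟨i, hi⟩ hpos⟩
  refine satisfiesHyp_of_nonpos_on_hyperplane (isHermitian_iff_isSymm.mp hM) u fun v hv ↦ ?_
  rw [dotProduct_mulVec_self_eq_sum_eigenvalues hM]
  refine Finset.sum_nonpos fun i _ ↦ ?_
  rcases le_or_gt (hM.eigenvalues i) 0 with hi | hi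
  · exact mul_nonpos_of_nonpos_of_nonneg hi (sq_nonneg _)
  · simp [hu i hi, hv]

/-- If `w ⬝ᵥ M *ᵥ w = 0` then `M = 0`, and the quotient on the right is `0 / 0 = 0`. -/
lemma SatisfiesHyp.dotProduct_mulVec_self_le_div (h : SatisfiesHyp M) (hM : ∀ i j, 0 ≤ M i j)
    {w : Fin n → ℝ} (hw : ∀ i, 0 < w i) (v : Fin n → ℝ) :
    v ⬝ᵥ M *ᵥ v ≤ (v ⬝ᵥ M *ᵥ w) ^ 2 / (w ⬝ᵥ M *ᵥ w) := by
  have hw0 : 0 ≤ w := fun i ↦ (hw i).le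
  have hq : 0 ≤ w ⬝ᵥ M *ᵥ w := dotProduct_nonneg_of_nonneg hw0 (mulVec_nonneg_of_nonneg hM hw0)
  rcases hq.eq_or_lt with h0 | hpos
  · simp [eq_zero_of_dotProduct_mulVec_eq_zero hM hw h0.symm]
  · exact (le_div_iff₀ hpos).mpr (h v w hpos)

end Hyp

section Laplacian

variable {ι : Type*}

/-- The graph on the index set whose edges are the nonzero entries of `M` is connected apart
from isolated vertices: any two indices with a nonzero row are joined by a path. For symmetric `M`
this is irreducibility after deleting the zero rows and columns. -/
def IsConnectedOnSupport {R : Type*} [Zero R] (M : Matrix ι ι R) : Prop :=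
  ∀ i j, M i ≠ 0 → M j ≠ 0 → Relation.ReflTransGen (fun a b ↦ M a b ≠ 0) i j

lemma IsConnectedOnSupport.exists_forall_eq {R α : Type*} [Zero R] [Nonempty α]
    {M : Matrix ι ι R} (hM : IsConnectedOnSupport M) {y : ι → α}
    (hy : ∀ i j, M i j ≠ 0 → y i = y j) : ∃ c, ∀ i, M i ≠ 0 → y i = c := by
  by_cases hrow : ∃ i, M i ≠ 0
  · obtain ⟨i, hi⟩ := hrow
    refine ⟨y i, fun j hj ↦ ?_⟩
    have hpath := (hM i j hi hj).lift (p := Eq) y hy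
    rw [Relation.reflTransGen_eq_self] at hpath
    exact hpath.symm
  · exact ⟨Classical.arbitrary α, fun i hi ↦ absurd ⟨i, hi⟩ hrow⟩

variable [Fintype ι] {M : Matrix ι ι ℝ} {w : ι → ℝ}

section DecidableEq

variable [DecidableEq ι]

/-- The Laplacian `D - M` of the graph with edge weights `M i j`, where `D` is the diagonal
matrix with `D *ᵥ w = M *ᵥ w` (for `w` nowhere zero), so that `w` lies in the kernel. For `w = 1`
this is the usual weighted graph Laplacian. -/
noncomputable def laplacian (M : Matrix ι ι ℝ) (w : ι → ℝ) : Matrix ι ι ℝ :=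
  diagonal (M *ᵥ w / w) - M

lemma laplacian_isSymm (hM : M.IsSymm) (w : ι → ℝ) : (laplacian M w).IsSymm :=
  (isSymm_diagonal _).sub hM

lemma laplacian_mulVec (M : Matrix ι ι ℝ) (w v : ι → ℝ) :
    laplacian M w *ᵥ v = M *ᵥ w / w * v - M *ᵥ v := by
  rw [laplacian, sub_mulVec]
  ext i
  simp [mulVec_diagonal]

lemma two_mul_dotProduct_laplacian_mulVec_self (hM : M.IsSymm) (hw : ∀ i, w i ≠ 0) (x : ι → ℝ) :
    2 * (x ⬝ᵥ laplacian M w *ᵥ x) =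
      ∑ i, ∑ j, M i j * w i * w j * (x i / w i - x j / w j) ^ 2 := by
  have hterm (i j : ι) : M i j * w i * w j * (x i / w i - x j / w j) ^ 2 =
      M i j * w j * (x i ^ 2 / w i) + M j i * w i * (x j ^ 2 / w j)
        - 2 * (x i * (M i j * x j)) := by
    rw [hM.apply i j]
    field_simp [hw i, hw j]
    ring
  have hdiag : ∑ i, ∑ j, M i j * w j * (x i ^ 2 / w i) = x ⬝ᵥ (M *ᵥ w / w * x) := by
    refine Finset.sum_congr rfl fun i _ ↦ ?_
    rw [← Finset.sum_mul, Pi.mul_apply, Pi.div_apply, mulVec, dotProduct]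
    ring
  simp only [hterm, Finset.sum_sub_distrib, Finset.sum_add_distrib]
  rw [Finset.sum_comm (f := fun i j ↦ M j i * w i * (x j ^ 2 / w j)), hdiag, laplacian_mulVec,
    dotProduct_sub]
  simp only [← Finset.mul_sum]
  simp only [dotProduct, mulVec]
  ring

lemma dotProduct_laplacian_mulVec_self_nonneg (hM : M.IsSymm) (hM0 : ∀ i j, 0 ≤ M i j)
    (hw : ∀ i, 0 < w i) (x : ι → ℝ) : 0 ≤ x ⬝ᵥ laplacian M w *ᵥ x := by
  refine nonneg_of_mul_nonneg_right ?_ (zero_lt_two' ℝ)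
  rw [two_mul_dotProduct_laplacian_mulVec_self hM fun i ↦ (hw i).ne']
  exact Finset.sum_nonneg fun i _ ↦ Finset.sum_nonneg fun j _ ↦ mul_nonneg
    (mul_nonneg (mul_nonneg (hM0 i j) (hw i).le) (hw j).le) (sq_nonneg _)

lemma div_eq_div_of_laplacian_mulVec_eq_zero (hM : M.IsSymm) (hM0 : ∀ i j, 0 ≤ M i j)
    (hw : ∀ i, 0 < w i) {x : ι → ℝ} (hx : laplacian M w *ᵥ x = 0) {i j : ι} (hij : M i j ≠ 0) :
    x i / w i = x j / w j := by
  have hsum := two_mul_dotProduct_laplacian_mulVec_self hM (fun i ↦ (hw i).ne') x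
  rw [hx, dotProduct_zero, mul_zero, eq_comm] at hsum
  have hterm (i j : ι) : 0 ≤ M i j * w i * w j * (x i / w i - x j / w j) ^ 2 :=
    mul_nonneg (mul_nonneg (mul_nonneg (hM0 i j) (hw i).le) (hw j).le) (sq_nonneg _)
  simpa [hij, (hw i).ne', (hw j).ne', sub_eq_zero] using
    eq_zero_of_sum_sum_eq_zero hterm hsum i j

lemma exists_laplacian_mulVec_eq (hM : M.IsSymm) (hM0 : ∀ i j, 0 ≤ M i j)
    (hconn : IsConnectedOnSupport M) (hw : ∀ i, 0 < w i) {v : ι → ℝ} (hv : M *ᵥ w ⬝ᵥ v = 0) :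
    ∃ u, laplacian M w *ᵥ u = M *ᵥ w / w * v := by
  refine exists_mulVec_eq_of_isSymm (laplacian_isSymm hM w) fun x hx ↦ ?_
  obtain ⟨c, hc⟩ := hconn.exists_forall_eq (y := x / w) fun i j ↦
    div_eq_div_of_laplacian_mulVec_eq_zero hM hM0 hw hx
  have hterm (i : ι) : x i * ((M *ᵥ w) i / w i * v i) = c * ((M *ᵥ w) i * v i) := by
    by_cases hi : M i = 0
    · simp [mulVec, hi]
    · rw [← hc i hi, Pi.div_apply]
      ring
  calc x ⬝ᵥ (M *ᵥ w / w * v) = c * (M *ᵥ w ⬝ᵥ v) := by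
        simp only [dotProduct, Pi.mul_apply, Pi.div_apply, hterm, Finset.mul_sum]
    _ = 0 := by rw [hv, mul_zero]

end DecidableEq

theorem dotProduct_mulVec_self_nonpos_of_bochner (hM : M.IsSymm) (hM0 : ∀ i j, 0 ≤ M i j)
    (hconn : IsConnectedOnSupport M) (hw : ∀ i, 0 < w i)
    (hbochner : ∀ u, u ⬝ᵥ M *ᵥ u ≤ ∑ i, w i * ((M *ᵥ u) i ^ 2 / (M *ᵥ w) i))
    {v : ι → ℝ} (hv : M *ᵥ w ⬝ᵥ v = 0) : v ⬝ᵥ M *ᵥ v ≤ 0 := by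
  classical
  obtain ⟨u, hu⟩ := exists_laplacian_mulVec_eq hM hM0 hconn hw hv
  have hMu : M *ᵥ u = M *ᵥ w / w * (u - v) := by
    rw [laplacian_mulVec] at hu
    rw [mul_sub, ← hu, sub_sub_cancel]
  have hlap : laplacian M w *ᵥ (u - v) = M *ᵥ v := by
    rw [mulVec_sub, hu, laplacian_mulVec, sub_sub_cancel]
  have hvv_le : v ⬝ᵥ M *ᵥ v ≤ u ⬝ᵥ M *ᵥ v := by
    have := dotProduct_laplacian_mulVec_self_nonneg hM hM0 hw (u - v)
    rwa [hlap, sub_dotProduct, sub_nonneg] at this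
  have huv_le : u ⬝ᵥ M *ᵥ u ≤ (u - v) ⬝ᵥ M *ᵥ u := by
    refine (hbochner u).trans_eq (Finset.sum_congr rfl fun i _ ↦ ?_)
    have := (hw i).ne'
    simp only [hMu, Pi.mul_apply, Pi.div_apply, Pi.sub_apply]
    by_cases hi : (M *ᵥ w) i = 0
    · simp [hi]
    · field_simp
  rw [sub_dotProduct, dotProduct_mulVec_comm_of_isSymm hM v u] at huv_le
  linarith

end Laplacian

section Coefficients

variable {σ : Type*}

lemma pderiv_pderiv_comm {R : Type*} [CommSemiring R] (i j : σ) (p : MvPolynomial σ R) :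
    pderiv i (pderiv j p) = pderiv j (pderiv i p) := by
  obtain rfl | hij := eq_or_ne i j
  · rfl
  ext m
  simp only [coeff_pderiv, Finsupp.add_apply, Finsupp.single_eq_of_ne hij,
    Finsupp.single_eq_of_ne hij.symm, add_zero,
    add_right_comm m (Finsupp.single i 1), mul_right_comm]

lemma mem_support_pderiv {R : Type*} [CommSemiring R] [NoZeroDivisors R] [CharZero R] {i : σ}
    {p : MvPolynomial σ R} {m : σ →₀ ℕ} :
    m ∈ (pderiv i p).support ↔ m + Finsupp.single i 1 ∈ p.support := by
  simp [coeff_pderiv, Nat.cast_add_one_ne_zero]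

variable {R : Type*} [CommSemiring R] [PartialOrder R] [IsStrictOrderedRing R]
  {p : MvPolynomial σ R}

lemma coeff_pderiv_nonneg (hp : ∀ m, 0 ≤ p.coeff m) (i : σ) (m : σ →₀ ℕ) :
    0 ≤ (pderiv i p).coeff m := by
  rw [coeff_pderiv]
  exact mul_nonneg (hp _) (by positivity)

lemma eval_nonneg_of_coeff_nonneg (hp : ∀ m, 0 ≤ p.coeff m) {w : σ → R} (hw : ∀ i, 0 ≤ w i) :
    0 ≤ eval w p := by
  rw [eval_eq]
  exact Finset.sum_nonneg fun m _ ↦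
    mul_nonneg (hp m) (Finset.prod_nonneg fun i _ ↦ pow_nonneg (hw i) _)

lemma eval_eq_zero_iff_of_coeff_nonneg (hp : ∀ m, 0 ≤ p.coeff m) {w : σ → R}
    (hw : ∀ i, 0 < w i) : eval w p = 0 ↔ p = 0 := by
  refine ⟨fun h ↦ ?_, fun h ↦ by rw [h, map_zero]⟩
  have hmonomial (m : σ →₀ ℕ) : 0 < ∏ i ∈ m.support, w i ^ m i :=
    Finset.prod_pos fun i _ ↦ pow_pos (hw i) _
  rw [eval_eq, Finset.sum_eq_zero_iff_of_nonneg fun m _ ↦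
    mul_nonneg (hp m) (hmonomial m).le] at h
  ext m
  by_contra hm
  exact (mul_pos ((hp m).lt_of_ne' hm) (hmonomial m)).ne' (h m (mem_support_iff.mpr hm))

end Coefficients

section MConvex

variable {n : ℕ} {J : Set (Fin n →₀ ℕ)}

lemma MConvex.preimage_add_single (hJ : MConvex J) (i : Fin n) :
    MConvex ((· + Finsupp.single i 1) ⁻¹' J) := by
  intro m hm m' hm' k hk
  obtain ⟨j, hj, hmem⟩ := hJ _ hm _ hm' k (by simpa using hk)
  refine ⟨j, by simpa using hj, ?_⟩
  have hkm : Finsupp.single k 1 ≤ m := Finsupp.single_le_iff.mpr (by omega)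
  rwa [Set.mem_preimage, add_right_comm, tsub_add_eq_add_tsub hkm]

/-- The path goes from `m` to `m'` through the exchange of `i` out of `m` towards `m'`: since the
degree is at least two, the result still meets `m`. -/
lemma MConvex.reflTransGen_of_mem_support (hJ : MConvex J) (hdeg : ∀ m ∈ J, 2 ≤ m.degree)
    {m m' : Fin n →₀ ℕ} (hm : m ∈ J) (hm' : m' ∈ J) {i j : Fin n} (hi : i ∈ m.support)
    (hj : j ∈ m'.support) :
    Relation.ReflTransGen (fun a b ↦ ∃ l ∈ J, a ∈ l.support ∧ b ∈ l.support) i j := by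
  by_cases hi' : i ∈ m'.support
  · exact .single ⟨m', hm', hi', hj⟩
  obtain ⟨l, hl, hexch⟩ := hJ m hm m' hm' i (by simp_all [Nat.pos_iff_ne_zero])
  obtain ⟨p, rfl⟩ : ∃ p, m = p + Finsupp.single i 1 :=
    ⟨m - Finsupp.single i 1, (tsub_add_cancel_of_le (Finsupp.single_le_iff.mpr
      (Nat.one_le_iff_ne_zero.mpr (Finsupp.mem_support_iff.mp hi)))).symm⟩
  rw [add_tsub_cancel_right] at hexch
  obtain ⟨a, ha⟩ : p.support.Nonempty := by
    have := hdeg _ hm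
    rw [Finsupp.support_nonempty_iff]
    rintro rfl
    rw [zero_add, Finsupp.degree_single] at this
    omega
  have hap (k : Fin n) : a ∈ (p + Finsupp.single k 1).support := by simp_all
  have hlm' : l ∈ m'.support := Finsupp.mem_support_iff.mpr (Nat.ne_zero_of_lt hl)
  exact .trans (.single ⟨_, hm, hi, hap i⟩)
    (.trans (.single ⟨_, hexch, hap l, by simp⟩) (.single ⟨m', hm', hlm', hj⟩))

end MConvex

section Hessian

variable {n : ℕ} {f : MvPolynomial (Fin n) ℝ} {w : Fin n → ℝ}

lemma hess_isSymm (f : MvPolynomial (Fin n) ℝ) (w : Fin n → ℝ) : (hess f w).IsSymm :=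
  IsSymm.ext fun i j ↦ by rw [hess, hess, pderiv_pderiv_comm]

lemma hess_nonneg (hf : ∀ m, 0 ≤ f.coeff m) (hw : ∀ i, 0 ≤ w i) (i j : Fin n) :
    0 ≤ hess f w i j :=
  eval_nonneg_of_coeff_nonneg (coeff_pderiv_nonneg (coeff_pderiv_nonneg hf j) i) hw

lemma hess_ne_zero_iff (hf : ∀ m, 0 ≤ f.coeff m) (hw : ∀ i, 0 < w i) {i j : Fin n} :
    hess f w i j ≠ 0 ↔ ∃ m, m + Finsupp.single i 1 + Finsupp.single j 1 ∈ f.support := by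
  rw [hess, (eval_eq_zero_iff_of_coeff_nonneg
    (coeff_pderiv_nonneg (coeff_pderiv_nonneg hf j) i) hw).ne, ← support_nonempty]
  simp only [Finset.Nonempty, mem_support_pderiv]

lemma hess_ne_zero_of_mem_support (hf : ∀ m, 0 ≤ f.coeff m) (hw : ∀ i, 0 < w i)
    {m : Fin n →₀ ℕ} (hm : m ∈ f.support) {i j : Fin n} (hi : i ∈ m.support)
    (hj : j ∈ m.support) (hij : i ≠ j) : hess f w i j ≠ 0 := by
  refine (hess_ne_zero_iff hf hw).mpr ⟨m - (Finsupp.single i 1 + Finsupp.single j 1), ?_⟩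
  rwa [add_assoc, tsub_add_cancel_of_le]
  intro k
  simp only [Finsupp.mem_support_iff] at hi hj
  simp only [Finsupp.add_apply, Finsupp.single_apply]
  grind

theorem isConnectedOnSupport_hess {d : ℕ} (hd : 2 ≤ d) (hf : f.IsHomogeneous d)
    (hf0 : ∀ m, 0 ≤ f.coeff m) (hJ : MConvex (f.support : Set (Fin n →₀ ℕ)))
    (hw : ∀ i, 0 < w i) : IsConnectedOnSupport (hess f w) := by
  have hdeg (m) (hm : m ∈ (f.support : Set (Fin n →₀ ℕ))) : 2 ≤ m.degree := by
    rw [Finsupp.degree_eq_weight_one]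
    exact hd.trans_eq (hf (mem_support_iff.mp hm)).symm
  have hmem (i : Fin n) (hi : hess f w i ≠ 0) : ∃ m ∈ f.support, i ∈ m.support := by
    obtain ⟨j, hij⟩ := Function.ne_iff.mp hi
    obtain ⟨m, hm⟩ := (hess_ne_zero_iff hf0 hw).mp hij
    exact ⟨_, hm, by simp⟩
  intro i j hi hj
  obtain ⟨m, hm, him⟩ := hmem i hi
  obtain ⟨m', hm', hjm'⟩ := hmem j hj
  refine Relation.ReflTransGen.lift' id ?_ i j
    (hJ.reflTransGen_of_mem_support hdeg hm hm' him hjm')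
  rintro a b ⟨l, hl, ha, hb⟩
  obtain rfl | hab := eq_or_ne a b
  · exact .refl
  · exact .single (hess_ne_zero_of_mem_support hf0 hw hl ha hb hab)

lemma hess_eq_of_isHomogeneous_two (hf : f.IsHomogeneous 2) (w w' : Fin n → ℝ) :
    hess f w = hess f w' := by
  ext i j
  have h : (pderiv i (pderiv j f)).IsHomogeneous 0 := hf.pderiv.pderiv
  rw [← totalDegree_zero_iff_isHomogeneous, totalDegree_eq_zero_iff_eq_C] at h
  rw [hess, hess, h, eval_C, eval_C]

lemma sum_smul_hess_pderiv {k : ℕ} (hf : f.IsHomogeneous (k + 2)) (w : Fin n → ℝ) :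
    ∑ i, w i • hess (pderiv i f) w = (k : ℝ) • hess f w := by
  ext j l
  have euler := congrArg (eval w) ((hf.pderiv (i := l)).pderiv (i := j)).sum_X_mul_pderiv
  have hcomm (i : Fin n) :
      pderiv j (pderiv l (pderiv i f)) = pderiv i (pderiv j (pderiv l f)) := by
    rw [pderiv_pderiv_comm l, pderiv_pderiv_comm j]
  simpa [Matrix.sum_apply, hess, hcomm] using euler

lemma hess_pderiv_mulVec {k : ℕ} (hf : f.IsHomogeneous (k + 2)) (w : Fin n → ℝ) (i : Fin n) :
    hess (pderiv i f) w *ᵥ w = (k : ℝ) • hess f w i := by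
  ext j
  have hcomm (l : Fin n) : hess (pderiv i f) w j l = hess (pderiv l f) w i j := by
    rw [hess, hess, pderiv_pderiv_comm l, pderiv_pderiv_comm j, pderiv_pderiv_comm j]
  have heuler := congrFun₂ (sum_smul_hess_pderiv hf w) i j
  simpa [Matrix.sum_apply, mulVec, dotProduct, hcomm, mul_comm (w _)] using heuler

theorem bochner_hess {k : ℕ} (hf : f.IsHomogeneous (k + 3)) (hf0 : ∀ m, 0 ≤ f.coeff m)
    (hw : ∀ i, 0 < w i) (hyp : ∀ i, SatisfiesHyp (hess (pderiv i f) w)) (v : Fin n → ℝ) :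
    v ⬝ᵥ hess f w *ᵥ v ≤
      ∑ i, w i * ((hess f w *ᵥ v) i ^ 2 / (hess f w *ᵥ w) i) := by
  have hk : (0 : ℝ) < (k + 1 : ℕ) := by positivity
  have hrow (i : Fin n) (x : Fin n → ℝ) :
      x ⬝ᵥ hess (pderiv i f) w *ᵥ w = (k + 1 : ℕ) * (hess f w *ᵥ x) i := by
    rw [hess_pderiv_mulVec hf, dotProduct_smul, smul_eq_mul, dotProduct_comm, mulVec]
  have hterm (i : Fin n) : v ⬝ᵥ hess (pderiv i f) w *ᵥ v ≤
      (k + 1 : ℕ) * ((hess f w *ᵥ v) i ^ 2 / (hess f w *ᵥ w) i) := by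
    have h := (hyp i).dotProduct_mulVec_self_le_div
      (hess_nonneg (coeff_pderiv_nonneg hf0 i) fun i ↦ (hw i).le) hw v
    rwa [hrow, hrow, mul_pow, pow_two, mul_assoc, mul_div_mul_left _ _ hk.ne', mul_div_assoc] at h
  refine le_of_mul_le_mul_left ?_ hk
  calc ((k + 1 : ℕ) : ℝ) * (v ⬝ᵥ hess f w *ᵥ v)
      = ∑ i, w i * (v ⬝ᵥ hess (pderiv i f) w *ᵥ v) := by
        rw [← smul_eq_mul, ← dotProduct_smul, ← smul_mulVec, ← sum_smul_hess_pderiv hf,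
          sum_mulVec, dotProduct_sum]
        simp only [smul_mulVec, dotProduct_smul, smul_eq_mul]
    _ ≤ ∑ i, w i * ((k + 1 : ℕ) * ((hess f w *ᵥ v) i ^ 2 / (hess f w *ᵥ w) i)) :=
        Finset.sum_le_sum fun i _ ↦ mul_le_mul_of_nonneg_left (hterm i) (hw i).le
    _ = (k + 1 : ℕ) * ∑ i, w i * ((hess f w *ᵥ v) i ^ 2 / (hess f w *ᵥ w) i) := by
        rw [Finset.mul_sum]
        exact Finset.sum_congr rfl fun i _ ↦ mul_left_comm _ _ _

end Hessian

section IteratedDerivatives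

lemma foldr_iterate_add_single {ι α : Type*} {D : ι → α → α}
    (hD : ∀ i j, Function.Commute (D i) (D j)) (m : ι →₀ ℕ) {i : ι} {l : List ι} (hl : l.Nodup)
    (hi : i ∈ l) (x : α) :
    l.foldr (fun j ↦ (D j)^[(m + Finsupp.single i 1 : ι →₀ ℕ) j]) x =
      l.foldr (fun j ↦ (D j)^[m j]) (D i x) := by
  have hcomm (l : List ι) :
      l.foldr (fun j ↦ (D j)^[m j]) (D i x) = D i (l.foldr (fun j ↦ (D j)^[m j]) x) :=
    List.foldr_hom (D i) fun j y ↦ ((hD j i).iterate_left (m j)).eq y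
  have hne {a : ι} (h : a ≠ i) : (m + Finsupp.single i 1 : ι →₀ ℕ) a = m a := by simp [h]
  induction l with
  | nil => simp at hi
  | cons a l ih =>
    obtain ⟨hal, hl⟩ := List.nodup_cons.mp hl
    rw [List.foldr_cons, List.foldr_cons]
    obtain rfl | hai := eq_or_ne a i
    · rw [hcomm, Finsupp.add_apply, Finsupp.single_eq_same, Function.iterate_succ_apply]
      congr 2
      exact List.foldr_ext _ _ _ fun b hb y ↦ by rw [hne (ne_of_mem_of_not_mem hb hal)]
    · rw [ih hl (List.mem_of_ne_of_mem hai.symm hi), hne hai]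

variable {n : ℕ}

lemma iterPderiv_pderiv (m : Fin n →₀ ℕ) (i : Fin n) (f : MvPolynomial (Fin n) ℝ) :
    iterPderiv m (pderiv i f) = iterPderiv (m + Finsupp.single i 1) f :=
  (foldr_iterate_add_single (D := fun i p ↦ pderiv i p) pderiv_pderiv_comm m
    (Finset.nodup_toList Finset.univ) (Finset.mem_toList.mpr (Finset.mem_univ i)) f).symm

lemma iterPderiv_zero (f : MvPolynomial (Fin n) ℝ) : iterPderiv 0 f = f :=
  List.foldr_fixed _

end IteratedDerivatives

section Lorentzian

variable {n : ℕ} {f : MvPolynomial (Fin n) ℝ}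

lemma IsLorentzian.pderiv {k : ℕ} (hf : IsLorentzian (k + 3) f) (i : Fin n) :
    IsLorentzian (k + 2) (pderiv i f) := by
  obtain ⟨hhom, hnonneg, hconvex, heig⟩ := hf
  refine ⟨hhom.pderiv, coeff_pderiv_nonneg hnonneg i, ?_, fun m hm ↦ ?_⟩
  · convert hconvex.preimage_add_single i
    ext m
    exact mem_support_pderiv
  · rw [iterPderiv_pderiv]
    refine heig _ ?_
    simp [Finset.sum_add_distrib, hm]

end Lorentzian

theorem stmt_11 {n d : ℕ} (hd : 2 ≤ d) (f : MvPolynomial (Fin n) ℝ)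
    (hf : IsLorentzian d f) (w : Fin n → ℝ) (hw : ∀ i, 0 < w i) :
    SatisfiesHyp (hess f w) := by
  induction d, hd using Nat.le_induction generalizing f with
  | base =>
    have heig := hf.2.2.2 0 (by simp)
    rw [iterPderiv_zero] at heig
    rw [hess_eq_of_isHomogeneous_two hf.1 w 0]
    exact heig.satisfiesHyp
  | succ d hd ih =>
    obtain ⟨k, rfl⟩ := Nat.exists_eq_add_of_le' hd
    obtain ⟨hhom, hnonneg, hconvex, -⟩ := id hf
    have hsymm := hess_isSymm f w
    have hconn := isConnectedOnSupport_hess (by omega) hhom hnonneg hconvex hw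
    have hbochner := bochner_hess hhom hnonneg hw fun i ↦ ih _ (hf.pderiv i)
    exact satisfiesHyp_of_nonpos_on_hyperplane hsymm (hess f w *ᵥ w) fun v ↦
      dotProduct_mulVec_self_nonpos_of_bochner hsymm
        (hess_nonneg hnonneg fun i ↦ (hw i).le) hconn hw hbochner
end

section
/- Let f ∈ ℝ[w_1, …, w_n] be a homogeneous polynomial of degree d ≥ 2 with nonnegative coefficients whose support is M-convex, and let w ∈ ℝ^n have all coordinates strictly positive. Then the Hessian matrix H_f(w) is irreducible when restricted to its support: for every nonempty proper subset S ⊊ supp(H_f(w)) there exist i ∈ S and j ∈ supp(H_f(w)) \ S with (∂_i ∂_j f)(w) ≠ 0. -/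
open Matrix MvPolynomial
open scoped Classical

/-- The support of a matrix: the set of indices whose row is nonzero. -/
noncomputable def matrixSupp {n : ℕ} (M : Matrix (Fin n) (Fin n) ℝ) : Finset (Fin n) :=
  Finset.univ.filter fun i => M i ≠ 0

/-!
All terms of a second partial derivative of `f` are nonnegative at `w`, so `(∂ᵢ∂ⱼf)(w) ≠ 0` exactly
when `wᵢwⱼ` divides a monomial of `f`, and the claim is about the support alone. Suppose that no
monomial involves variables both inside and outside `S`. Take a monomial `m` divisible by `wᵢwₗ`
with `i ∈ S`, hence `l ∈ S`, and a monomial `m'` in the variables outside `S`. Exchanging `i` in `m`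
for a variable `k` of `m'` produces a monomial divisible by `wₗwₖ`, although `l ∈ S` and `k ∉ S`.
-/

section Polynomial

variable {σ R : Type*} [CommSemiring R]

lemma mem_support_pderiv_iff [NoZeroDivisors R] [CharZero R] {f : MvPolynomial σ R} {i : σ}
    {m : σ →₀ ℕ} : m ∈ (pderiv i f).support ↔ m + Finsupp.single i 1 ∈ f.support := by
  have hm : (m i + 1 : R) ≠ 0 := Nat.cast_add_one_ne_zero (m i)
  simp only [mem_support_iff, coeff_pderiv, ne_eq, mul_eq_zero, hm, or_false]

variable [PartialOrder R]

lemma coeff_pderiv_nonneg_s13 [IsOrderedRing R] {f : MvPolynomial σ R} (hf : ∀ m, 0 ≤ f.coeff m)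
    (i : σ) (m : σ →₀ ℕ) : 0 ≤ (pderiv i f).coeff m := by
  rw [coeff_pderiv]
  exact mul_nonneg (hf _) (add_nonneg (Nat.cast_nonneg _) zero_le_one)

lemma eval_pos_of_coeff_nonneg [IsStrictOrderedRing R] {f : MvPolynomial σ R}
    (hf : ∀ m, 0 ≤ f.coeff m) (hf₀ : f ≠ 0) {w : σ → R} (hw : ∀ i, 0 < w i) :
    0 < eval w f := by
  rw [eval_eq]
  refine Finset.sum_pos (fun m hm => ?_) (support_nonempty.mpr hf₀)
  exact mul_pos ((hf m).lt_of_ne' (mem_support_iff.mp hm))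
    (Finset.prod_pos fun i _ => pow_pos (hw i) _)

end Polynomial

section CoOccur

/-- The indices `i` and `j` co-occur in a set `J` of exponent vectors if `wᵢwⱼ` divides `w ^ m` for
some `m ∈ J`. For `i = j` this asks for `2 ≤ m i`. When `J` is the support of a polynomial with
nonnegative coefficients, this is the pattern of nonzero entries of its Hessian. -/
def CoOccur {σ : Type*} (J : Set (σ →₀ ℕ)) (i j : σ) : Prop :=
  ∃ m ∈ J, Finsupp.single i 1 + Finsupp.single j 1 ≤ m

variable {σ : Type*} {J : Set (σ →₀ ℕ)} {i j : σ}

lemma CoOccur.symm (h : CoOccur J i j) : CoOccur J j i := by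
  rwa [CoOccur, add_comm]

lemma CoOccur.exists_ne_zero (h : CoOccur J i j) : ∃ m ∈ J, m i ≠ 0 := by
  obtain ⟨m, hm, hle⟩ := h
  exact ⟨m, hm, Nat.one_le_iff_ne_zero.mp (Finsupp.single_le_iff.mp (le_self_add.trans hle))⟩

lemma coOccur_of_ne {m : σ →₀ ℕ} (hm : m ∈ J) (hij : i ≠ j) (hi : m i ≠ 0) (hj : m j ≠ 0) :
    CoOccur J i j := by
  refine ⟨m, hm, fun x => ?_⟩
  simp only [Finsupp.add_apply, Finsupp.single_apply]
  grind

lemma pderiv_pderiv_ne_zero_iff {R : Type*} [CommSemiring R] [NoZeroDivisors R] [CharZero R]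
    {f : MvPolynomial σ R} :
    pderiv i (pderiv j f) ≠ 0 ↔ CoOccur (f.support : Set (σ →₀ ℕ)) i j := by
  simp only [← support_nonempty, Finset.Nonempty, mem_support_pderiv_iff, CoOccur,
    le_iff_exists_add', Finset.mem_coe]
  constructor
  · rintro ⟨m, hm⟩
    exact ⟨_, hm, m, add_assoc ..⟩
  · rintro ⟨_, hm, m, rfl⟩
    exact ⟨m, by rwa [add_assoc]⟩

end CoOccur

theorem MConvex.exists_coOccur_mem_notMem {n : ℕ} {J : Set (Fin n →₀ ℕ)} (hJ : MConvex J)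
    {S : Set (Fin n)} {i j l : Fin n} {m' : Fin n →₀ ℕ} (hi : i ∈ S) (hil : CoOccur J i l)
    (hj : j ∉ S) (hm' : m' ∈ J) (hm'j : m' j ≠ 0) : ∃ a ∈ S, ∃ b ∉ S, CoOccur J a b := by
  by_contra! hcross
  have hm'S : ∀ a ∈ S, m' a = 0 := fun a ha => by
    by_contra hm'a
    exact hcross a ha j hj (coOccur_of_ne hm' (ne_of_mem_of_not_mem ha hj) hm'a hm'j)
  have hl : l ∈ S := by
    by_contra hl
    exact hcross i hi l hl hil
  obtain ⟨_, hm, hle⟩ := hil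
  obtain ⟨r, rfl⟩ := le_iff_exists_add.mp hle
  obtain ⟨k, hk, hexch⟩ := hJ _ hm m' hm' i (by simp [hm'S i hi])
  have hkS : k ∉ S := fun hkS => by simp [hm'S k hkS] at hk
  rw [add_assoc, add_tsub_cancel_left] at hexch
  exact hcross l hl k hkS ⟨_, hexch, by gcongr; exact le_self_add⟩

section Hessian

variable {n : ℕ}

lemma mem_matrixSupp_iff {M : Matrix (Fin n) (Fin n) ℝ} {i : Fin n} :
    i ∈ matrixSupp M ↔ ∃ j, M i j ≠ 0 := by
  simp only [matrixSupp, Finset.mem_filter_univ, Function.ne_iff, Pi.zero_apply]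

lemma hess_apply_ne_zero_iff {f : MvPolynomial (Fin n) ℝ} (hcoeff : ∀ m, 0 ≤ f.coeff m)
    {w : Fin n → ℝ} (hw : ∀ i, 0 < w i) {i j : Fin n} :
    hess f w i j ≠ 0 ↔ CoOccur (f.support : Set (Fin n →₀ ℕ)) i j := by
  rw [← pderiv_pderiv_ne_zero_iff, hess]
  refine ⟨fun h h₀ => h (by rw [h₀, map_zero]), fun h => ?_⟩
  exact (eval_pos_of_coeff_nonneg (coeff_pderiv_nonneg_s13 (coeff_pderiv_nonneg_s13 hcoeff j) i) h hw).ne'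

lemma mem_matrixSupp_hess_iff {f : MvPolynomial (Fin n) ℝ} (hcoeff : ∀ m, 0 ≤ f.coeff m)
    {w : Fin n → ℝ} (hw : ∀ i, 0 < w i) {i : Fin n} :
    i ∈ matrixSupp (hess f w) ↔ ∃ j, CoOccur (f.support : Set (Fin n →₀ ℕ)) i j := by
  simp only [mem_matrixSupp_iff, hess_apply_ne_zero_iff hcoeff hw]

end Hessian

theorem stmt_13 {n d : ℕ} (hd : 2 ≤ d) (f : MvPolynomial (Fin n) ℝ)
    (hf : f.IsHomogeneous d) (hcoeff : ∀ m, 0 ≤ f.coeff m)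
    (hM : MConvex (↑f.support : Set (Fin n →₀ ℕ)))
    (w : Fin n → ℝ) (hw : ∀ i, 0 < w i) :
    ∀ S : Finset (Fin n), S.Nonempty → S ⊂ matrixSupp (hess f w) →
      ∃ i ∈ S, ∃ j ∈ matrixSupp (hess f w) \ S, hess f w i j ≠ 0 := by
  rintro S ⟨i, hi⟩ hS
  obtain ⟨j, hj, hjS⟩ := (Finset.ssubset_iff_of_subset hS.subset).mp hS
  obtain ⟨l, hil⟩ := (mem_matrixSupp_hess_iff hcoeff hw).mp (hS.subset hi)
  obtain ⟨_, hjk⟩ := (mem_matrixSupp_hess_iff hcoeff hw).mp hj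
  obtain ⟨m', hm', hm'j⟩ := hjk.exists_ne_zero
  obtain ⟨a, ha, b, hb, hab⟩ := hM.exists_coOccur_mem_notMem (S := S) hi hil hjS hm' hm'j
  have hb' : b ∈ matrixSupp (hess f w) := (mem_matrixSupp_hess_iff hcoeff hw).mpr ⟨a, hab.symm⟩
  exact ⟨a, ha, b, Finset.mem_sdiff.mpr ⟨hb', hb⟩, (hess_apply_ne_zero_iff hcoeff hw).mpr hab⟩
end
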